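/- Let d ≥ 1 and let u be a tempered distribution on ℝ^{1+2d} = ℝ_t × ℝ^d_x × ℝ^d_{x'} with values in a finite-dimensional complex vector space E ≅ ℂ^m. Suppose Q₁u is a smooth function and Q₂u is a smooth function, where Q₁ = −∂_t² + Δ_x + (first-order operator in (t,x,x') with smooth L(E)-valued coefficients) and Q₂ = −∂_t² + Δ_{x'} + (first-order operator in (t,x,x') with smooth L(E)-valued coefficients). Then every point (t,x,x';ξ,k,k') ∈ WF(u) satisfies ξ² = |k|² and ξ² = |k'|². In particular, WF(u) contains no point whose first covariable component ξ is zero, i.e. WF(u) ∩ K⁰ = ∅ where K⁰ := ℝ^{1+2d} × ({0} × ℝ^{2d}). -/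

import Mathlib

/-!
The theorem is microlocal elliptic regularity for systems whose principal part is scalar with
constant coefficients: if `P(k) = k_0² - Σ_i k_{sp i}²` does not vanish at `k₀`, then `k₀` is a
regular direction of every component of `u` at every point. Applied to `Q₁` and `Q₂` this gives the
two equations, and if the time component of a covector on both cones vanishes, so does the covector.

Instead of a parametrix, the proof uses a bootstrap in the decay exponent. Fix an open cone `Γ`
around `k₀` on which `c|k|² < |P(k)|`, and let `Est u Γ s` say that `u_l(a e^{-i⟨·,k⟩})` is
`O((1+|k|)^s)` on `Γ` for *every* test function `a` and every component `l`.

* Since a tempered distribution is bounded by finitely many Schwartz seminorms, and seminorms of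
  `a e^{-i⟨·,k⟩}` grow polynomially in `k`, `Est` holds for some `s` (`exists_growth`).
* Testing `Q u = f` against `a e^{-i⟨·,k⟩}` writes `P(k) u_j(a e^{-i⟨·,k⟩})` as the Fourier transform
  of the test function `f_j a`, which decays rapidly (`fourier_decay`), plus terms
  `u_l(b e^{-i⟨·,k⟩})` and `k_μ u_l(b e^{-i⟨·,k⟩})` with new amplitudes `b`. Dividing by `P(k)` gives
  `Est u Γ s → Est u Γ (s - 1)` (`Est.step`).

As all amplitudes are treated at once, neither cut-offs nor cones shrink along the induction.
-/

open MeasureTheory Complex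

noncomputable section

abbrev Vec (p : ℕ) : Type := Fin p → ℝ

abbrev TD (p : ℕ) := SchwartzMap (Vec p) ℂ →L[ℂ] ℂ

def modFn {p : ℕ} (φ : SchwartzMap (Vec p) ℂ) (k : Vec p) : Vec p → ℂ :=
  fun x => φ x * Complex.exp (-Complex.I * ((∑ i, x i * k i : ℝ) : ℂ))

def IsConicNbhd {p : ℕ} (Γ : Set (Vec p)) (k₀ : Vec p) : Prop :=
  IsOpen Γ ∧ k₀ ∈ Γ ∧ ∀ k ∈ Γ, ∀ t : ℝ, 0 < t → t • k ∈ Γ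

def IsRegularDirectedPoint {p : ℕ} (u : TD p) (x₀ k₀ : Vec p) : Prop :=
  ∃ φ : SchwartzMap (Vec p) ℂ, HasCompactSupport ⇑φ ∧ φ x₀ ≠ 0 ∧
    ∃ Γ : Set (Vec p), IsConicNbhd Γ k₀ ∧
      ∀ n : ℕ, ∃ C : ℝ, ∀ k ∈ Γ, ∀ ψ : SchwartzMap (Vec p) ℂ,
        (∀ x, ψ x = modFn φ k x) → ‖u ψ‖ ≤ C * (1 + ‖k‖) ^ (-(n : ℤ))

def wfSet {p : ℕ} (u : TD p) : Set (Vec p × Vec p) :=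
  {z | z.2 ≠ 0 ∧ ¬ IsRegularDirectedPoint u z.1 z.2}

def wfSetVec {p m : ℕ} (u : Fin m → TD p) : Set (Vec p × Vec p) := ⋃ i, wfSet (u i)

def partialFourierIntegral {q : ℕ} (φ : Vec (q+1) → ℂ) (y : Vec (q+1)) : ℂ :=
  ∫ t : ℝ, Complex.exp (-Complex.I * ((t * y 0 : ℝ) : ℂ)) * φ (Function.update y 0 t)

def PFVanishesOn {q : ℕ} (u : TD (q+1)) (U : Set (Vec (q+1))) : Prop :=
  ∀ φ ψ : SchwartzMap (Vec (q+1)) ℂ, HasCompactSupport ⇑φ → tsupport ⇑φ ⊆ U →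
    (∀ y, ψ y = partialFourierIntegral ⇑φ y) → u ψ = 0

def pfSupport {q : ℕ} (u : TD (q+1)) : Set (Vec (q+1)) :=
  {y | ¬ ∃ U : Set (Vec (q+1)), IsOpen U ∧ y ∈ U ∧ PFVanishesOn u U}

def fullFourierIntegral {p : ℕ} (φ : Vec p → ℂ) (y : Vec p) : ℂ :=
  ∫ x : Vec p, Complex.exp (-Complex.I * ((∑ i, x i * y i : ℝ) : ℂ)) * φ x

def FFVanishesOn {p : ℕ} (u : TD p) (U : Set (Vec p)) : Prop :=
  ∀ φ ψ : SchwartzMap (Vec p) ℂ, HasCompactSupport ⇑φ → tsupport ⇑φ ⊆ U →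
    (∀ y, ψ y = fullFourierIntegral ⇑φ y) → u ψ = 0

def ffSupport {p : ℕ} (u : TD p) : Set (Vec p) :=
  {y | ¬ ∃ U : Set (Vec p), IsOpen U ∧ y ∈ U ∧ FFVanishesOn u U}


/-- Directional derivative along the `μ`-th coordinate direction. -/
def sdirD {n : ℕ} (μ : Fin n) (f : Vec n → ℂ) : Vec n → ℂ :=
  fun x => fderiv ℝ f x (Pi.single μ 1)

/-- The second order part `-∂_t² + Σ_{i} ∂²_{sp i}` of a normally hyperbolic operator on
`ℝ^{1+2d}`, where `sp : Fin d → Fin (2d+1)` enumerates the relevant spatial coordinates. -/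
def secondOrderPart {d : ℕ} (sp : Fin d → Fin (2*d+1)) (φ : Vec (2*d+1) → ℂ)
    (x : Vec (2*d+1)) : ℂ :=
  -(sdirD 0 (sdirD 0 φ) x) + ∑ i : Fin d, sdirD (sp i) (sdirD (sp i) φ) x

/-- The hypothesis that `Q u` is a smooth function, where
`Q = -∂_t² + Σ_i ∂²_{sp i} + Σ_μ K^μ ∂_μ + L` for some smooth `L(E)`-valued coefficients
`K^μ, L`, expressed distributionally: testing the `j`-th component of `Q u` against any
compactly supported test function `φ` (via the formal transpose of `Q`) gives integration of
`φ` against a smooth function `f`. -/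
def QSmoothHyp (d m : ℕ) (sp : Fin d → Fin (2*d+1)) (u : Fin m → TD (2*d+1)) : Prop :=
  ∃ K : Fin (2*d+1) → Vec (2*d+1) → Fin m → Fin m → ℂ,
  ∃ L : Vec (2*d+1) → Fin m → Fin m → ℂ,
  ∃ f : Vec (2*d+1) → Fin m → ℂ,
    (∀ μ j l, ContDiff ℝ (⊤ : ℕ∞) fun x => K μ x j l) ∧
    (∀ j l, ContDiff ℝ (⊤ : ℕ∞) fun x => L x j l) ∧
    (∀ j, ContDiff ℝ (⊤ : ℕ∞) fun x => f x j) ∧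
    ∀ j : Fin m, ∀ φ : SchwartzMap (Vec (2*d+1)) ℂ, HasCompactSupport ⇑φ →
      ∀ ψ : Fin m → SchwartzMap (Vec (2*d+1)) ℂ,
        (∀ l x, ψ l x =
            (if l = j then secondOrderPart sp ⇑φ x else 0)
            - (∑ μ, sdirD μ (fun y => K μ y j l * φ y) x) + L x j l * φ x) →
        (∑ l, u l (ψ l)) = ∫ x, f x j * φ x

/-! ### Modulation by an oscillating exponential -/

/-- The oscillating exponential `x ↦ e^{-i⟨x,k⟩}`. -/
def osc {p : ℕ} (k : Vec p) : Vec p → ℂ :=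
  fun x => Complex.exp (-Complex.I * ((∑ i, x i * k i : ℝ) : ℂ))

/-- The linear form `x ↦ ⟨x,k⟩`. -/
def phase {p : ℕ} (k : Vec p) : Vec p →L[ℝ] ℝ :=
  ∑ i, k i • ContinuousLinearMap.proj (R := ℝ) (φ := fun _ : Fin p => ℝ) i

lemma phase_apply {p : ℕ} (k x : Vec p) : phase k x = ∑ i, x i * k i := by
  simp [phase, mul_comm]

lemma norm_phase_le {p : ℕ} (k : Vec p) : ‖phase k‖ ≤ p * ‖k‖ := by
  refine ContinuousLinearMap.opNorm_le_bound _ (by positivity) fun x => ?_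
  rw [phase_apply]
  calc ‖∑ i, x i * k i‖ ≤ ∑ i : Fin p, ‖x‖ * ‖k‖ := by
        refine norm_sum_le_of_le _ fun i _ => ?_
        rw [norm_mul]
        gcongr <;> exact norm_le_pi_norm _ i
    _ = p * ‖k‖ * ‖x‖ := by simp; ring

lemma osc_eq_comp {p : ℕ} (k : Vec p) :
    osc k = (fun t : ℝ => Complex.exp (-Complex.I * (t : ℂ))) ∘ phase k := by
  ext x; simp [osc, phase_apply]

lemma norm_osc {p : ℕ} (k x : Vec p) : ‖osc k x‖ = 1 := by
  simp only [osc]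
  rw [show -Complex.I * ((∑ i, x i * k i : ℝ) : ℂ) = ((-(∑ i, x i * k i) : ℝ) : ℂ) * Complex.I by
    push_cast; ring]
  exact Complex.norm_exp_ofReal_mul_I _

lemma contDiff_expI : ContDiff ℝ (⊤ : ℕ∞) (fun t : ℝ => Complex.exp (-Complex.I * (t : ℂ))) := by
  have : ContDiff ℝ (⊤ : ℕ∞) (fun t : ℝ => (t : ℂ)) := Complex.ofRealCLM.contDiff
  fun_prop

lemma contDiff_osc {p : ℕ} (k : Vec p) : ContDiff ℝ (⊤ : ℕ∞) (osc k) := by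
  rw [osc_eq_comp]
  exact contDiff_expI.comp (phase k).contDiff

lemma iteratedDeriv_expI (n : ℕ) :
    iteratedDeriv n (fun t : ℝ => Complex.exp (-Complex.I * (t : ℂ))) =
      fun t : ℝ => (-Complex.I) ^ n * Complex.exp (-Complex.I * (t : ℂ)) := by
  induction n with
  | zero => simp
  | succ n ih =>
    rw [iteratedDeriv_succ, ih]
    ext t
    have h : HasDerivAt (fun t : ℝ => (-Complex.I) ^ n * Complex.exp (-Complex.I * (t : ℂ)))
        ((-Complex.I) ^ n * (Complex.exp (-Complex.I * (t : ℂ)) * (-Complex.I * 1))) t :=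
      (((Complex.ofRealCLM.hasDerivAt (x := t)).const_mul (-Complex.I)).cexp).const_mul _
    rw [h.deriv]; ring

lemma norm_iteratedFDeriv_phase_le {p : ℕ} (k x : Vec p) (i : ℕ) (hi : 1 ≤ i) :
    ‖iteratedFDeriv ℝ i (phase k) x‖ ≤ (p * ‖k‖) ^ i := by
  obtain ⟨j, rfl⟩ : ∃ j, i = j + 1 := ⟨i - 1, by omega⟩
  rw [← norm_iteratedFDeriv_fderiv]
  have : fderiv ℝ (phase k) = fun _ => phase k := by ext1 v; simp
  rw [this]
  rcases Nat.eq_zero_or_pos j with rfl | hj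
  · simpa using norm_phase_le k
  · rw [iteratedFDeriv_const_of_ne hj.ne']
    simp only [Pi.zero_apply, norm_zero]; positivity

lemma norm_iteratedFDeriv_osc_le {p : ℕ} (k x : Vec p) (n : ℕ) :
    ‖iteratedFDeriv ℝ n (osc k) x‖ ≤ n.factorial * 1 * (p * ‖k‖) ^ n := by
  rw [osc_eq_comp]
  refine norm_iteratedFDeriv_comp_le contDiff_expI (phase k).contDiff
    (by exact_mod_cast le_top) x (fun i _ => ?_)
    (fun i hi _ => norm_iteratedFDeriv_phase_le k x i hi)
  rw [norm_iteratedFDeriv_eq_norm_iteratedDeriv, iteratedDeriv_expI]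
  rw [norm_mul, norm_pow, norm_neg, Complex.norm_I, one_pow, one_mul]
  rw [show -Complex.I * (phase k x : ℂ) = ((-(phase k x) : ℝ) : ℂ) * Complex.I by
    push_cast; ring]
  exact (Complex.norm_exp_ofReal_mul_I _).le

lemma hasTemperateGrowth_osc {p : ℕ} (k : Vec p) : (osc k).HasTemperateGrowth := by
  refine ⟨contDiff_osc k, fun n => ⟨0, n.factorial * 1 * (p * ‖k‖) ^ n, fun x => ?_⟩⟩
  simpa using norm_iteratedFDeriv_osc_le k x n

/-- Multiplication by `e^{-i⟨·,k⟩}` as an operator on Schwartz space. -/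
def modS {p : ℕ} (k : Vec p) : SchwartzMap (Vec p) ℂ →L[ℂ] SchwartzMap (Vec p) ℂ :=
  SchwartzMap.smulLeftCLM ℂ (osc k)

lemma modS_apply {p : ℕ} (k : Vec p) (a : SchwartzMap (Vec p) ℂ) (x : Vec p) :
    modS k a x = osc k x * a x := by
  simp [modS, SchwartzMap.smulLeftCLM_apply_apply (hasTemperateGrowth_osc k)]

/-- Schwartz seminorms of `a e^{-i⟨·,k⟩}` grow polynomially in `k`. -/
lemma seminorm_modS_le {p : ℕ} (a : SchwartzMap (Vec p) ℂ) (r n : ℕ) :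
    ∃ C : ℝ, 0 ≤ C ∧ ∀ k : Vec p,
      SchwartzMap.seminorm ℂ r n (modS k a) ≤ C * (1 + ‖k‖) ^ n := by
  refine ⟨∑ i ∈ Finset.range (n + 1), (n.choose i : ℝ) * (i.factorial * p ^ i) *
    SchwartzMap.seminorm ℂ r (n - i) a, by positivity, fun k => ?_⟩
  refine SchwartzMap.seminorm_le_bound ℂ r n _ (by positivity) fun x => ?_
  have h1 : ⇑(modS k a) = fun y => osc k y * a y := funext fun y => modS_apply k a y
  rw [h1]
  refine (mul_le_mul_of_nonneg_left (norm_iteratedFDeriv_mul_le (contDiff_osc k)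
    (a.smooth ⊤) x (by exact_mod_cast le_top)) (by positivity)).trans ?_
  rw [Finset.mul_sum, Finset.sum_mul]
  refine Finset.sum_le_sum fun i hi => ?_
  have h2 := norm_iteratedFDeriv_osc_le k x i
  have h3 := SchwartzMap.le_seminorm ℂ r (n - i) a x
  have hin : i ≤ n := by simpa [Nat.lt_succ_iff] using hi
  have h4 : ‖k‖ ^ i ≤ (1 + ‖k‖) ^ n :=
    (pow_le_pow_left₀ (norm_nonneg _) (by linarith) i).trans
      (pow_le_pow_right₀ (by linarith [norm_nonneg k]) hin)
  calc ‖x‖ ^ r * ((n.choose i : ℝ) * ‖iteratedFDeriv ℝ i (osc k) x‖ *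
        ‖iteratedFDeriv ℝ (n - i) (⇑a) x‖)
      = (n.choose i : ℝ) * ‖iteratedFDeriv ℝ i (osc k) x‖ *
        (‖x‖ ^ r * ‖iteratedFDeriv ℝ (n - i) (⇑a) x‖) := by ring
    _ ≤ (n.choose i : ℝ) * (i.factorial * 1 * (p * ‖k‖) ^ i) *
        SchwartzMap.seminorm ℂ r (n - i) a := by gcongr
    _ = (n.choose i : ℝ) * (i.factorial * p ^ i) *
        SchwartzMap.seminorm ℂ r (n - i) a * ‖k‖ ^ i := by rw [mul_pow]; ring
    _ ≤ _ := by gcongr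

/-- The order of a tempered distribution controls the growth of `u(a e^{-i⟨·,k⟩})` in `k`, with an
exponent independent of the amplitude `a`. -/
lemma exists_growth {p : ℕ} (u : TD p) : ∃ M : ℕ, ∀ a : SchwartzMap (Vec p) ℂ,
    ∃ C : ℝ, ∀ k : Vec p, ‖u (modS k a)‖ ≤ C * (1 + ‖k‖) ^ M := by
  obtain ⟨s, C, -, hC⟩ := Seminorm.bound_of_continuous (schwartz_withSeminorms ℂ (Vec p) ℂ)
    ((normSeminorm ℂ ℂ).comp u.toLinearMap) (by
      change Continuous fun f => ‖u f‖
      exact u.continuous.norm)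
  refine ⟨s.sup Prod.snd, fun a => ?_⟩
  choose D hD0 hD using fun q : ℕ × ℕ => seminorm_modS_le a q.1 q.2
  refine ⟨C * ∑ q ∈ s, D q, fun k => ?_⟩
  have h1 : ‖u (modS k a)‖ ≤ C * (s.sup (schwartzSeminormFamily ℂ (Vec p) ℂ)) (modS k a) :=
    hC (modS k a)
  have h2 : (s.sup (schwartzSeminormFamily ℂ (Vec p) ℂ)) (modS k a) ≤
      (∑ q ∈ s, D q) * (1 + ‖k‖) ^ (s.sup Prod.snd) := by
    refine Seminorm.finset_sup_apply_le (mul_nonneg (Finset.sum_nonneg fun q _ => hD0 q)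
      (by positivity)) fun q hq => ?_
    refine (hD q k).trans ?_
    gcongr
    · exact Finset.sum_nonneg fun q _ => hD0 q
    · exact Finset.single_le_sum (f := D) (fun q _ => hD0 q) hq
    · linarith [norm_nonneg k]
    · exact Finset.le_sup (f := Prod.snd) hq
  calc _ ≤ _ := h1
    _ ≤ C * ((∑ q ∈ s, D q) * (1 + ‖k‖) ^ (s.sup Prod.snd)) := by gcongr
    _ = _ := by ring

open LineDeriv Asymptotics Filter

/-! ### Differentiation of modulated amplitudes and decay of Fourier transforms -/

/-- The coordinate derivative `∂_μ` on Schwartz space. -/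
def dS {p : ℕ} (μ : Fin p) : SchwartzMap (Vec p) ℂ →L[ℂ] SchwartzMap (Vec p) ℂ :=
  lineDerivOpCLM ℂ (SchwartzMap (Vec p) ℂ) (Pi.single μ (1 : ℝ) : Vec p)

lemma coe_dS {p : ℕ} (μ : Fin p) (a : SchwartzMap (Vec p) ℂ) : ⇑(dS μ a) = sdirD μ ⇑a := rfl

lemma hasCompactSupport_dS {p : ℕ} (μ : Fin p) {a : SchwartzMap (Vec p) ℂ}
    (ha : HasCompactSupport ⇑a) : HasCompactSupport ⇑(dS μ a) :=
  ha.fderiv_apply (𝕜 := ℝ) (v := Pi.single μ 1)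

lemma hasFDerivAt_osc {p : ℕ} (k x : Vec p) :
    HasFDerivAt (osc k) (osc k x • (-Complex.I) • Complex.ofRealCLM.comp (phase k)) x := by
  have h : HasFDerivAt (fun y : Vec p => ((phase k y : ℝ) : ℂ))
      (Complex.ofRealCLM.comp (phase k)) x :=
    (Complex.ofRealCLM.comp (phase k)).hasFDerivAt
  have h2 := (h.const_mul (-Complex.I)).cexp
  simpa [osc_eq_comp, Function.comp_def] using h2

lemma phase_single {p : ℕ} (k : Vec p) (μ : Fin p) : phase k (Pi.single μ 1) = k μ := by
  simp [phase_apply, Pi.single_apply]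

/-- Conjugation by `e^{-i⟨·,k⟩}` turns `∂_μ` into `∂_μ - i k_μ`. -/
lemma dS_modS {p : ℕ} (μ : Fin p) (k : Vec p) (a : SchwartzMap (Vec p) ℂ) :
    dS μ (modS k a) = modS k (dS μ a) - (Complex.I * (k μ : ℂ)) • modS k a := by
  ext x
  have h1 : ⇑(modS k a) = fun y => osc k y * a y := funext fun y => modS_apply k a y
  have h2 : HasFDerivAt (fun y => osc k y * a y) _ x :=
    (hasFDerivAt_osc k x).mul (a.hasFDerivAt x)
  rw [coe_dS, sub_apply, smul_apply, modS_apply, modS_apply, coe_dS]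
  simp only [sdirD]
  rw [h1, h2.fderiv]
  simp [phase_single]
  ring

lemma integral_dS {p : ℕ} (μ : Fin p) (a : SchwartzMap (Vec p) ℂ) : ∫ x, dS μ a x = 0 := by
  have hd : Integrable (fun x => fderiv ℝ a x (Pi.single μ 1)) := (dS μ a).integrable
  have := integral_mul_fderiv_eq_neg_fderiv_mul_of_integrable (μ := (volume : Measure (Vec p)))
    (f := fun _ => (1 : ℂ)) (g := ⇑a) (v := Pi.single μ 1) (by simp)
    (by simpa using hd) (by simpa using a.integrable)
    (fun _ _ => by fun_prop) (fun x _ => a.differentiable x)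
  change ∫ x, fderiv ℝ a x (Pi.single μ 1) = 0
  simpa using this

/-- Rapid decay of the Fourier transform of a Schwartz function, by integrating by parts. -/
lemma fourier_decay {p : ℕ} (n : ℕ) (a : SchwartzMap (Vec p) ℂ) :
    ∃ C : ℝ, ∀ k : Vec p, (1 + ‖k‖) ^ n * ‖∫ x, modS k a x‖ ≤ C := by
  induction n generalizing a with
  | zero =>
    refine ⟨∫ x, ‖a x‖, fun k => ?_⟩
    rw [pow_zero, one_mul]
    refine (norm_integral_le_integral_norm _).trans (le_of_eq ?_)
    simp [modS_apply, norm_osc]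
  | succ n ih =>
    obtain ⟨C, hC⟩ := ih a
    choose D hD using fun μ : Fin p => ih (dS μ a)
    refine ⟨C + ∑ μ, D μ, fun k => ?_⟩
    have h1 : ∀ μ : Fin p, |k μ| * ‖∫ x, modS k a x‖ = ‖∫ x, modS k (dS μ a) x‖ := fun μ => by
      have h := integral_dS μ (modS k a)
      rw [dS_modS] at h
      simp only [sub_apply, smul_apply, smul_eq_mul] at h
      rw [integral_sub (modS k (dS μ a)).integrable ((modS k a).integrable.const_mul _),
        integral_const_mul, sub_eq_zero] at h
      rw [h]; simp
    have h2 : ‖k‖ ≤ ∑ μ, |k μ| := by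
      refine (pi_norm_le_iff_of_nonneg (Finset.sum_nonneg fun _ _ => abs_nonneg _)).2 fun μ => ?_
      exact Finset.single_le_sum (f := fun μ => |k μ|) (fun _ _ => abs_nonneg _)
        (Finset.mem_univ μ)
    calc (1 + ‖k‖) ^ (n + 1) * ‖∫ x, modS k a x‖
        ≤ (1 + ‖k‖) ^ n * ((1 + ∑ μ, |k μ|) * ‖∫ x, modS k a x‖) := by
          rw [pow_succ, mul_assoc]; gcongr
      _ = (1 + ‖k‖) ^ n * ‖∫ x, modS k a x‖ +
          ∑ μ, (1 + ‖k‖) ^ n * ‖∫ x, modS k (dS μ a) x‖ := by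
          simp_rw [← h1]
          rw [← Finset.mul_sum, ← Finset.sum_mul]; ring
      _ ≤ _ := add_le_add (hC k) (Finset.sum_le_sum fun μ _ => hD μ k)

/-- A smooth multiple of a test function is a test function; the coefficients of `Q` are not assumed
to have temperate growth, so compact support of `a` is needed here. -/
lemma exists_mul {p : ℕ} {g : Vec p → ℂ} (hg : ContDiff ℝ (⊤ : ℕ∞) g)
    {a : SchwartzMap (Vec p) ℂ} (ha : HasCompactSupport ⇑a) :
    ∃ b : SchwartzMap (Vec p) ℂ, HasCompactSupport ⇑b ∧ ∀ x, b x = g x * a x :=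
  have h : HasCompactSupport (fun x => g x * a x) := ha.mul_left
  ⟨h.toSchwartzMap (hg.mul (a.smooth ⊤)), h, fun _ => rfl⟩

/-! ### The elliptic bootstrap -/

/-- The symbol `k_0² - Σ_i k_{sp i}²` of the second order part. -/
def symb {d : ℕ} (sp : Fin d → Fin (2*d+1)) (k : Vec (2*d+1)) : ℝ :=
  (k 0) ^ 2 - ∑ i, (k (sp i)) ^ 2

/-- The second order part as an operator on Schwartz space. -/
def secS {d : ℕ} (sp : Fin d → Fin (2*d+1)) (a : SchwartzMap (Vec (2*d+1)) ℂ) :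
    SchwartzMap (Vec (2*d+1)) ℂ :=
  -(dS 0 (dS 0 a)) + ∑ i, dS (sp i) (dS (sp i) a)

lemma secS_apply {d : ℕ} (sp : Fin d → Fin (2*d+1)) (a : SchwartzMap (Vec (2*d+1)) ℂ)
    (x : Vec (2*d+1)) : secS sp a x = secondOrderPart sp ⇑a x := by
  simp [secS, secondOrderPart, sum_apply, coe_dS]

/-- For every cut-off amplitude `a`, each `u_l(a e^{-i⟨·,k⟩})` is `O((1+|k|)^s)` on `Γ`. -/
def Est {p m : ℕ} (u : Fin m → TD p) (Γ : Set (Vec p)) (s : ℤ) : Prop :=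
  ∀ l, ∀ a : SchwartzMap (Vec p) ℂ, HasCompactSupport ⇑a →
    (fun k => u l (modS k a)) =O[𝓟 Γ] fun k => (1 + ‖k‖) ^ s

lemma isBigO_zpow_mono {p : ℕ} (Γ : Set (Vec p)) {s t : ℤ} (h : s ≤ t) :
    (fun k : Vec p => (1 + ‖k‖) ^ s) =O[𝓟 Γ] fun k => (1 + ‖k‖) ^ t := by
  refine isBigO_principal.2 ⟨1, fun k _ => ?_⟩
  have h1 : 1 ≤ 1 + ‖k‖ := by linarith [norm_nonneg k]
  rw [one_mul, Real.norm_of_nonneg (by positivity), Real.norm_of_nonneg (by positivity)]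
  exact zpow_le_zpow_right₀ h1 h

lemma isBigO_coord_mul {p : ℕ} {Γ : Set (Vec p)} {s : ℤ} {h : Vec p → ℂ} (μ : Fin p)
    (hh : h =O[𝓟 Γ] fun k => (1 + ‖k‖) ^ s) :
    (fun k => (k μ : ℂ) * h k) =O[𝓟 Γ] fun k => (1 + ‖k‖) ^ (s + 1) := by
  have h1 : (fun k : Vec p => (k μ : ℂ)) =O[𝓟 Γ] fun k => 1 + ‖k‖ := by
    refine isBigO_principal.2 ⟨1, fun k _ => ?_⟩
    rw [one_mul, Real.norm_of_nonneg (by positivity), Complex.norm_real]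
    linarith [norm_le_pi_norm k μ]
  refine (h1.mul hh).congr_right fun k => ?_
  rw [zpow_add_one₀ (by positivity), mul_comm]

section Step

variable {p m : ℕ} {u : Fin m → TD p} {Γ : Set (Vec p)} {s : ℤ}

lemma Est.mono {t : ℤ} (hE : Est u Γ s) (h : s ≤ t) : Est u Γ t :=
  fun l a ha => (hE l a ha).trans (isBigO_zpow_mono Γ h)

lemma Est.isBigO_dS (hE : Est u Γ s) (l : Fin m) (μ : Fin p) {a : SchwartzMap (Vec p) ℂ}
    (ha : HasCompactSupport ⇑a) :
    (fun k => u l (dS μ (modS k a))) =O[𝓟 Γ] fun k => (1 + ‖k‖) ^ (s + 1) := by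
  have h1 := (hE.mono (by omega : s ≤ s + 1)) l _ (hasCompactSupport_dS μ ha)
  have h2 := (isBigO_coord_mul μ (hE l a ha)).const_mul_left Complex.I
  refine (h1.sub h2).congr_left fun k => ?_
  rw [dS_modS, map_sub, map_smul, smul_eq_mul, mul_assoc]

/-- Up to lower order, `∂_μ²` acts on `a e^{-i⟨·,k⟩}` as multiplication by `-k_μ²`. -/
lemma Est.isBigO_dS_dS (hE : Est u Γ s) (l : Fin m) (μ : Fin p) {a : SchwartzMap (Vec p) ℂ}
    (ha : HasCompactSupport ⇑a) :
    (fun k => u l (dS μ (dS μ (modS k a))) + (k μ : ℂ) ^ 2 * u l (modS k a))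
      =O[𝓟 Γ] fun k => (1 + ‖k‖) ^ (s + 1) := by
  have ha1 := hasCompactSupport_dS μ ha
  have h1 := (hE.mono (by omega : s ≤ s + 1)) l _ (hasCompactSupport_dS μ ha1)
  have h2 := (isBigO_coord_mul μ (hE l _ ha1)).const_mul_left (2 * Complex.I)
  refine (h1.sub h2).congr_left fun k => ?_
  simp only [dS_modS, map_sub, map_smul, smul_eq_mul]
  linear_combination -(k μ : ℂ) ^ 2 * u l (modS k a) * Complex.I_sq

end Step

/-- One step of the elliptic bootstrap: where the symbol is elliptic, the equation `Q u ∈ C^∞`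
improves the decay exponent by one. -/
lemma Est.step {d m : ℕ} {sp : Fin d → Fin (2*d+1)} {u : Fin m → TD (2*d+1)}
    (hQ : QSmoothHyp d m sp u) {Γ : Set (Vec (2*d+1))} {c : ℝ} (hc : 0 < c)
    (hΓ : ∀ k ∈ Γ, c * ‖k‖ ^ 2 ≤ |symb sp k|) {s : ℤ} (hE : Est u Γ s) : Est u Γ (s - 1) := by
  obtain ⟨K, L, f, hK, hL, hf, hQ⟩ := hQ
  intro j a ha
  choose b hb hb' using fun μ l => exists_mul (hK μ j l) ha
  choose e he he' using fun l => exists_mul (hL j l) ha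
  obtain ⟨g, -, hg'⟩ := exists_mul (hf j) ha
  -- The equation tested against `a e^{-i⟨·,k⟩}`, with the coefficients absorbed into the amplitudes:
  -- `b μ l = K^μ_{jl} a`, `e l = L_{jl} a`, `g = f_j a`.
  have key : ∀ k : Vec (2*d+1), u j (secS sp (modS k a))
      - (∑ l, ∑ μ, u l (dS μ (modS k (b μ l)))) + ∑ l, u l (modS k (e l))
      = ∫ x, modS k g x := by
    intro k
    have hka : HasCompactSupport ⇑(modS k a) := by
      have : ⇑(modS k a) = fun x => osc k x * a x := funext fun x => modS_apply k a x
      rw [this]; exact ha.mul_left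
    have h := hQ j (modS k a) hka
      (fun l => (if l = j then secS sp (modS k a) else 0)
        - (∑ μ, dS μ (modS k (b μ l))) + modS k (e l)) (by
      intro l x
      have h1 : ∀ μ, (fun y => K μ y j l * modS k a y) = ⇑(modS k (b μ l)) := fun μ => by
        ext y; rw [modS_apply, modS_apply, hb']; ring
      simp only [h1, add_apply, sub_apply, sum_apply, coe_dS]
      congr 1
      · congr 1
        split_ifs
        · exact secS_apply sp _ x
        · simp
      · rw [modS_apply, modS_apply, he']; ring)
    have h2 : ∀ x, f x j * modS k a x = modS k g x := fun x => by
      rw [modS_apply, modS_apply, hg']; ring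
    simp only [h2] at h
    rw [← h]
    simp only [map_add, map_sub, map_sum, Finset.sum_add_distrib, Finset.sum_sub_distrib]
    congr 2
    rw [Finset.sum_eq_single j] <;> simp +contextual
  have hG : (fun k => ∫ x, modS k g x) =O[𝓟 Γ] fun k => (1 + ‖k‖) ^ (s + 1) := by
    obtain ⟨C, hC⟩ := fourier_decay (s + 1).natAbs g
    refine IsBigO.trans (isBigO_principal.2 ⟨C, fun k _ => ?_⟩)
      (isBigO_zpow_mono Γ (show -((s + 1).natAbs : ℤ) ≤ s + 1 by omega))
    rw [Real.norm_of_nonneg (by positivity), zpow_neg, zpow_natCast, ← div_eq_mul_inv,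
      le_div_iff₀ (by positivity), mul_comm]
    exact hC k
  have hB : (fun k => ∑ l, ∑ μ, u l (dS μ (modS k (b μ l)))) =O[𝓟 Γ]
      fun k => (1 + ‖k‖) ^ (s + 1) :=
    IsBigO.fun_sum fun l _ => IsBigO.fun_sum fun μ _ => hE.isBigO_dS l μ (hb μ l)
  have hL' : (fun k => ∑ l, u l (modS k (e l))) =O[𝓟 Γ] fun k => (1 + ‖k‖) ^ (s + 1) :=
    IsBigO.fun_sum fun l _ => (hE.mono (by omega : s ≤ s + 1)) l _ (he l)
  have hS : (fun k => u j (secS sp (modS k a)) - (symb sp k : ℂ) * u j (modS k a)) =O[𝓟 Γ]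
      fun k => (1 + ‖k‖) ^ (s + 1) := by
    have h1 := (hE.isBigO_dS_dS j 0 ha).neg_left
    have h2 := IsBigO.fun_sum (s := Finset.univ) fun i _ => hE.isBigO_dS_dS j (sp i) ha
    refine (h1.add h2).congr_left fun k => ?_
    simp only [secS, symb, map_add, map_neg, map_sum, Finset.sum_add_distrib, ← Finset.sum_mul]
    push_cast
    ring
  have hP : (fun k => (symb sp k : ℂ) * u j (modS k a)) =O[𝓟 Γ]
      fun k => (1 + ‖k‖) ^ (s + 1) :=
    (((hG.add hB).sub hL').sub hS).congr_left fun k => by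
      linear_combination (-1 : ℂ) * key k
  -- The bound on `symb · u_j` controls `‖k‖² ‖u_j‖`; the a priori bound covers small `k`, and
  -- `(1 + ‖k‖)² ≤ 2 (1 + ‖k‖²)` combines the two.
  obtain ⟨C₁, hC₁⟩ := isBigO_principal.1 (hE.mono (by omega : s ≤ s + 1) j a ha)
  obtain ⟨C₂, hC₂⟩ := isBigO_principal.1 hP
  refine isBigO_principal.2 ⟨2 * (C₁ + C₂ / c), fun k hk => ?_⟩
  have h1 := hC₁ k hk
  have h2 := hC₂ k hk
  have h3 := hΓ k hk
  have hw : 0 < 1 + ‖k‖ := by positivity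
  rw [Real.norm_of_nonneg (by positivity)] at h1 h2 ⊢
  rw [norm_mul, Complex.norm_real, Real.norm_eq_abs] at h2
  set U := ‖u j (modS k a)‖ with hU
  have hU0 : 0 ≤ U := norm_nonneg _
  have h4 : ‖k‖ ^ 2 * U ≤ C₂ / c * (1 + ‖k‖) ^ (s + 1) := by
    rw [div_mul_eq_mul_div, le_div_iff₀ hc]
    nlinarith [mul_le_mul_of_nonneg_right h3 hU0]
  have h5 : (1 + ‖k‖) ^ 2 * U ≤ 2 * (U + ‖k‖ ^ 2 * U) := by
    nlinarith [mul_nonneg (sq_nonneg (1 - ‖k‖)) hU0]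
  have h6 : (1 + ‖k‖) ^ (s + 1) = (1 + ‖k‖) ^ (s - 1) * (1 + ‖k‖) ^ 2 := by
    rw [← zpow_natCast, ← zpow_add₀ hw.ne']; congr 1; push_cast; ring
  have h7 : U * (1 + ‖k‖) ^ 2 ≤ 2 * (C₁ + C₂ / c) * (1 + ‖k‖) ^ (s - 1) * (1 + ‖k‖) ^ 2 := by
    rw [mul_assoc _ _ ((1 + ‖k‖) ^ 2), ← h6]
    linarith
  exact le_of_mul_le_mul_right h7 (by positivity)

/-- A Schwartz cut-off not vanishing at `x₀`. -/
lemma exists_cutoff {p : ℕ} (x₀ : Vec p) :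
    ∃ φ : SchwartzMap (Vec p) ℂ, HasCompactSupport ⇑φ ∧ φ x₀ ≠ 0 := by
  let B : ContDiffBump x₀ := ⟨1, 2, one_pos, one_lt_two⟩
  have hBc : HasCompactSupport (fun x => (B x : ℂ)) :=
    B.hasCompactSupport.comp_left (g := Complex.ofReal) Complex.ofReal_zero
  have hBs : ContDiff ℝ (⊤ : ℕ∞) (fun x => (B x : ℂ)) :=
    Complex.ofRealCLM.contDiff.comp B.contDiff
  refine ⟨hBc.toSchwartzMap hBs, hBc, ?_⟩
  change (B x₀ : ℂ) ≠ 0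
  rw [B.one_of_mem_closedBall (Metric.mem_closedBall_self B.rIn_pos.le)]
  simp

/-- Microlocal elliptic regularity: non-characteristic directions are regular. The cone is
`{k | c‖k‖² < |symb k|}`, on which the bootstrap runs from the growth exponent given by the order of
`u` down to any `-n`. -/
lemma regular_of_symb_ne_zero {d m : ℕ} {sp : Fin d → Fin (2*d+1)} {u : Fin m → TD (2*d+1)}
    (hQ : QSmoothHyp d m sp u) (x₀ k₀ : Vec (2*d+1)) (hk₀ : symb sp k₀ ≠ 0) (l : Fin m) :
    IsRegularDirectedPoint (u l) x₀ k₀ := by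
  have hk0 : 0 < ‖k₀‖ := by
    rw [norm_pos_iff]; rintro rfl; simp [symb] at hk₀
  have hcont : Continuous (symb sp) := by unfold symb; fun_prop
  have hhom : ∀ (t : ℝ) k, symb sp (t • k) = t ^ 2 * symb sp k := fun t k => by
    simp only [symb, Pi.smul_apply, smul_eq_mul, mul_pow, ← Finset.mul_sum]; ring
  obtain ⟨c, hc, hck⟩ : ∃ c : ℝ, 0 < c ∧ c * ‖k₀‖ ^ 2 < |symb sp k₀| := by
    refine ⟨|symb sp k₀| / (2 * ‖k₀‖ ^ 2), by positivity, ?_⟩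
    have := abs_pos.2 hk₀
    rw [div_mul_eq_mul_div, div_lt_iff₀ (by positivity)]
    nlinarith [mul_pos this (pow_pos hk0 2)]
  obtain ⟨Γ, hΓ⟩ : ∃ Γ : Set (Vec (2*d+1)), ∀ k, k ∈ Γ ↔ c * ‖k‖ ^ 2 < |symb sp k| :=
    ⟨{k | c * ‖k‖ ^ 2 < |symb sp k|}, fun _ => Iff.rfl⟩
  have hΓc : IsConicNbhd Γ k₀ := by
    have hopen : IsOpen Γ := by
      rw [show Γ = {k | c * ‖k‖ ^ 2 < |symb sp k|} from Set.ext hΓ]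
      exact isOpen_lt (by fun_prop) hcont.abs
    refine ⟨hopen, (hΓ k₀).2 hck, fun k hk t ht => ?_⟩
    rw [hΓ] at hk ⊢
    rw [hhom, norm_smul, abs_mul, mul_pow, Real.norm_eq_abs, sq_abs, abs_of_nonneg (sq_nonneg t)]
    nlinarith [mul_lt_mul_of_pos_left hk (pow_pos ht 2)]
  choose M hM using fun l => exists_growth (u l)
  -- `Q` couples the components of `u`, so a common growth exponent is needed.
  obtain ⟨N, hN⟩ : ∃ N : ℕ, ∀ l, M l ≤ N :=
    ⟨Finset.univ.sup M, fun l => Finset.le_sup (f := M) (Finset.mem_univ l)⟩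
  have hbase : Est u Γ (N : ℤ) := by
    intro l a _
    obtain ⟨C, hC⟩ := hM l a
    refine IsBigO.trans (isBigO_principal.2 ⟨C, fun k _ => ?_⟩) (isBigO_zpow_mono Γ
      (show (M l : ℤ) ≤ N by exact_mod_cast hN l))
    rw [Real.norm_of_nonneg (by positivity), zpow_natCast]
    exact hC k
  have hall : ∀ n : ℕ, Est u Γ ((N : ℤ) - (n : ℤ)) := by
    intro n
    induction n with
    | zero => simpa using hbase
    | succ n ih =>
      have := Est.step hQ hc (fun k hk => ((hΓ k).1 hk).le) ih
      rwa [sub_sub, ← Nat.cast_succ] at this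
  obtain ⟨φ, hφ, hφ0⟩ := exists_cutoff x₀
  refine ⟨φ, hφ, hφ0, Γ, hΓc, fun n => ?_⟩
  have hn : Est u Γ (-(n : ℤ)) := by
    have := hall (N + n)
    rwa [Nat.cast_add, sub_add_cancel_left] at this
  obtain ⟨C, hC⟩ := isBigO_principal.1 (hn l φ hφ)
  refine ⟨C, fun k hk ψ hψ => ?_⟩
  have h1 : ψ = modS k φ := by
    ext x; rw [hψ, modS_apply, modFn, mul_comm]; rfl
  rw [h1]
  refine (hC k hk).trans_eq ?_
  rw [Real.norm_of_nonneg (by positivity)]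

/-- if `Q₁ u` and `Q₂ u` are smooth functions for normally hyperbolic operators
`Q₁ = -∂_t² + Δ_x + (first order)` and `Q₂ = -∂_t² + Δ_{x'} + (first order)` on
`ℝ^{1+2d} = ℝ_t × ℝ^d_x × ℝ^d_{x'}`, then every point `(t,x,x';ξ,k,k')` of the wave front set
of `u` satisfies `ξ² = |k|²` and `ξ² = |k'|²`; in particular `ξ ≠ 0`. -/
theorem statement3 (d m : ℕ) (hd : 1 ≤ d) (u : Fin m → TD (2*d+1))
    (h1 : QSmoothHyp d m (fun i => ⟨i.1 + 1, by have := i.isLt; omega⟩) u)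
    (h2 : QSmoothHyp d m (fun i => ⟨d + i.1 + 1, by have := i.isLt; omega⟩) u) :
    ∀ z ∈ wfSetVec u,
      (z.2 0)^2 = (∑ i : Fin d, (z.2 ⟨i.1 + 1, by have := i.isLt; omega⟩)^2) ∧
      (z.2 0)^2 = (∑ i : Fin d, (z.2 ⟨d + i.1 + 1, by have := i.isLt; omega⟩)^2) ∧
      z.2 0 ≠ 0 := by
  rintro ⟨x, k⟩ hz
  obtain ⟨l, hk, hreg⟩ := Set.mem_iUnion.1 hz
  have e1 : (k 0)^2 = ∑ i : Fin d, (k ⟨i.1 + 1, by have := i.isLt; omega⟩)^2 := by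
    by_contra h
    exact hreg (regular_of_symb_ne_zero h1 x k (sub_ne_zero.2 h) l)
  have e2 : (k 0)^2 = ∑ i : Fin d, (k ⟨d + i.1 + 1, by have := i.isLt; omega⟩)^2 := by
    by_contra h
    exact hreg (regular_of_symb_ne_zero h2 x k (sub_ne_zero.2 h) l)
  refine ⟨e1, e2, fun h0 => hk ?_⟩
  -- a vanishing time component forces both spatial components to vanish
  simp only at h0
  rw [h0, zero_pow two_ne_zero, eq_comm, Finset.sum_eq_zero_iff_of_nonneg
    fun _ _ => sq_nonneg _] at e1 e2
  funext μ
  obtain ⟨n, hn⟩ := μ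
  change k _ = 0
  rcases Nat.eq_zero_or_pos n with rfl | hpos
  · exact h0
  · rcases le_or_gt n d with hnd | hnd
    · have h := pow_eq_zero_iff two_ne_zero |>.1 (e1 ⟨n - 1, by omega⟩ (Finset.mem_univ _))
      rw [← h]; congr 2; simp only; omega
    · have h := pow_eq_zero_iff two_ne_zero |>.1 (e2 ⟨n - d - 1, by omega⟩ (Finset.mem_univ _))
      rw [← h]; congr 2; simp only; omega

end
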